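/- Corollary (MinHash p1 bound for cosine similarity): let W1, W2 be nonempty subsets of Ω = {1, ..., D} with cosine similarity S, and let π be a uniformly random permutation of Ω. If S ≥ S0 for some S0 ∈ [0,1], then the collision probability Pr(min(π(W1)) = min(π(W2))) = R satisfies R ≥ S0². -/

import Mathlib

/-!
Two sets `V` and `W` have the same MinHash exactly when the minimizer of `π` on `V ∪ W` lies in
`V ∩ W`. Under a min-wise independent family of permutations each element of `V ∪ W` is the
minimizer with probability `1 / |V ∪ W|`, so the collision probability is the resemblance. The
family of all permutations is min-wise independent, because precomposing with a transposition
exchanges the roles of any two candidates. With `a = |V ∩ W|`, the inequality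
`0 ≤ (|V| - a) * (|W| - a)` says that `a * |V ∪ W| ≤ |V| * |W|`, so the resemblance is at least
`a ^ 2 / (|V| * |W|)`, the square of the cosine similarity.
-/

open scoped Finset

section Similarity

variable {α : Type*} [DecidableEq α]

/-- The cosine similarity `S` of the indicator vectors of two finite sets; it is `0` if either set
is empty. -/
noncomputable def cosineSimilarity (V W : Finset α) : ℝ :=
  #(V ∩ W) / √(#V * #W)

/-- The resemblance `R` (Jaccard similarity) of two finite sets; it is `0` if both are empty. -/
noncomputable def resemblance (V W : Finset α) : ℝ :=
  #(V ∩ W) / #(V ∪ W)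

lemma card_inter_mul_card_union_le (V W : Finset α) : #(V ∩ W) * #(V ∪ W) ≤ #V * #W := by
  have hV : #(V ∩ W) ≤ #V := Finset.card_le_card Finset.inter_subset_left
  have hW : #(V ∩ W) ≤ #W := Finset.card_le_card Finset.inter_subset_right
  have hadd : #(V ∪ W) + #(V ∩ W) = #V + #W := Finset.card_union_add_card_inter V W
  zify at *
  linear_combination mul_nonneg (sub_nonneg.2 hV) (sub_nonneg.2 hW) + (#(V ∩ W) : ℤ) * hadd

lemma cosineSimilarity_sq_le_resemblance (V W : Finset α) :
    cosineSimilarity V W ^ 2 ≤ resemblance V W := by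
  rw [cosineSimilarity, resemblance, div_pow, Real.sq_sqrt (by positivity)]
  rcases (V ∩ W).eq_empty_or_nonempty with hempty | hne
  · simp [hempty]
  have hV : V.Nonempty := hne.mono Finset.inter_subset_left
  have hW : W.Nonempty := hne.mono Finset.inter_subset_right
  have hU : (V ∪ W).Nonempty := hV.mono Finset.subset_union_left
  have hcard : (#(V ∩ W) * #(V ∪ W) : ℝ) ≤ #V * #W :=
    mod_cast card_inter_mul_card_union_le V W
  rw [div_le_div_iff₀ (by positivity) (by positivity)]
  calc (#(V ∩ W) : ℝ) ^ 2 * #(V ∪ W)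
      = #(V ∩ W) * (#(V ∩ W) * #(V ∪ W)) := by ring
    _ ≤ #(V ∩ W) * (#V * #W) := by gcongr

end Similarity

section MinHash

variable {α : Type*} [LinearOrder α] {π : Equiv.Perm α} {V W : Finset α} {x : α}

/-- The MinHash `h_π^min(W) = min(π(W))` of a nonempty finite set. -/
def minHash (π : Equiv.Perm α) (W : Finset α) (hW : W.Nonempty) : α :=
  (W.image π).min' (hW.image π)

lemma minHash_eq_apply_iff (hW : W.Nonempty) (hx : x ∈ W) :
    minHash π W hW = π x ↔ ∀ y ∈ W, π x ≤ π y := by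
  rw [minHash, Finset.min'_eq_iff]
  simp [hx]

lemma exists_mem_minHash_eq_apply (π : Equiv.Perm α) (hW : W.Nonempty) :
    ∃ x ∈ W, minHash π W hW = π x := by
  obtain ⟨x, hx, hπx⟩ := Finset.mem_image.1 ((W.image π).min'_mem (hW.image π))
  exact ⟨x, hx, hπx.symm⟩

lemma minHash_eq_minHash_iff (hV : V.Nonempty) (hW : W.Nonempty) :
    minHash π V hV = minHash π W hW ↔ ∃ x ∈ V ∩ W, ∀ y ∈ V ∪ W, π x ≤ π y := by
  constructor
  · intro hcoll
    obtain ⟨x, hxV, hx⟩ := exists_mem_minHash_eq_apply π hV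
    obtain ⟨y, hyW, hy⟩ := exists_mem_minHash_eq_apply π hW
    obtain rfl : x = y := π.injective (hx.symm.trans (hcoll.trans hy))
    refine ⟨x, Finset.mem_inter.2 ⟨hxV, hyW⟩, fun z hz ↦ ?_⟩
    rcases Finset.mem_union.1 hz with hzV | hzW
    · exact (minHash_eq_apply_iff hV hxV).1 hx z hzV
    · exact (minHash_eq_apply_iff hW hyW).1 hy z hzW
  · rintro ⟨x, hx, hmin⟩
    obtain ⟨hxV, hxW⟩ := Finset.mem_inter.1 hx
    have hπV : minHash π V hV = π x :=
      (minHash_eq_apply_iff hV hxV).2 fun y hy ↦ hmin y (Finset.mem_union_left W hy)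
    have hπW : minHash π W hW = π x :=
      (minHash_eq_apply_iff hW hxW).2 fun y hy ↦ hmin y (Finset.mem_union_right V hy)
    rw [hπV, hπW]

end MinHash

section PermsMinimizedAt

variable {α : Type*} [LinearOrder α] {𝓕 : Finset (Equiv.Perm α)} {π : Equiv.Perm α}
  {X Y : Finset α} {x y : α}

/-- The permutations of the family `𝓕` whose minimum over `X` is attained at `x`. The event
`π(x) = min(π(X))` is encoded by inequalities, so that `X` need not be known to be nonempty. -/
def permsMinimizedAt (𝓕 : Finset (Equiv.Perm α)) (X : Finset α) (x : α) :
    Finset (Equiv.Perm α) :=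
  {π ∈ 𝓕 | ∀ y ∈ X, π x ≤ π y}

lemma mem_permsMinimizedAt :
    π ∈ permsMinimizedAt 𝓕 X x ↔ π ∈ 𝓕 ∧ ∀ y ∈ X, π x ≤ π y :=
  Finset.mem_filter

lemma pairwiseDisjoint_permsMinimizedAt (𝓕 : Finset (Equiv.Perm α)) (hYX : Y ⊆ X) :
    (Y : Set α).PairwiseDisjoint (permsMinimizedAt 𝓕 X) := by
  intro x hx y hy hxy
  refine Finset.disjoint_left.2 fun π hπx hπy ↦ hxy (π.injective (le_antisymm ?_ ?_))
  · exact (mem_permsMinimizedAt.1 hπx).2 y (hYX hy)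
  · exact (mem_permsMinimizedAt.1 hπy).2 x (hYX hx)

lemma disjiUnion_permsMinimizedAt (𝓕 : Finset (Equiv.Perm α)) (hX : X.Nonempty) :
    X.disjiUnion (permsMinimizedAt 𝓕 X) (pairwiseDisjoint_permsMinimizedAt 𝓕 subset_rfl) =
      𝓕 := by
  ext π
  have hmin : ∃ x ∈ X, ∀ y ∈ X, π x ≤ π y := X.exists_min_image π hX
  simp only [Finset.mem_disjiUnion, mem_permsMinimizedAt]
  tauto

variable [Fintype α]

lemma card_permsMinimizedAt_univ_eq (hx : x ∈ X) (hy : y ∈ X) :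
    #(permsMinimizedAt Finset.univ X x) = #(permsMinimizedAt Finset.univ X y) := by
  have hswap (z : α) : Equiv.swap x y z ∈ X ↔ z ∈ X := by
    rw [Equiv.swap_apply_def]
    grind
  refine Finset.card_equiv (Equiv.mulRight (Equiv.swap x y)) fun π ↦ ?_
  simp only [mem_permsMinimizedAt, Finset.mem_univ, true_and, Equiv.coe_mulRight,
    Equiv.Perm.mul_apply, Equiv.swap_apply_right]
  rw [← (Equiv.swap x y).forall_congr_right]
  simp only [hswap]

lemma card_mul_card_permsMinimizedAt_univ (hx : x ∈ X) :
    #X * #(permsMinimizedAt Finset.univ X x) = Fintype.card (Equiv.Perm α) :=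
  calc #X * #(permsMinimizedAt Finset.univ X x)
      = ∑ y ∈ X, #(permsMinimizedAt Finset.univ X y) :=
        (Finset.sum_const_nat fun _ hy ↦ card_permsMinimizedAt_univ_eq hy hx).symm
    _ = #(X.disjiUnion (permsMinimizedAt Finset.univ X)
          (pairwiseDisjoint_permsMinimizedAt Finset.univ subset_rfl)) :=
        (Finset.card_disjiUnion _ _ _).symm
    _ = Fintype.card (Equiv.Perm α) := by
        rw [disjiUnion_permsMinimizedAt Finset.univ ⟨x, hx⟩, Finset.card_univ]

end PermsMinimizedAt

section MinwiseIndependent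

variable {α : Type*} [LinearOrder α] {𝓕 : Finset (Equiv.Perm α)} {V W : Finset α}

/-- Min-wise independence of a finite family of permutations (Broder, Charikar, Frieze and
Mitzenmacher): under a uniformly random member of the family, every element of a finite set `X` is
equally likely to be the minimizer on `X`. If `α` is nonempty this forces `𝓕` to be nonempty. -/
def IsMinwiseIndependent (𝓕 : Finset (Equiv.Perm α)) : Prop :=
  ∀ X : Finset α, ∀ x ∈ X, (#(permsMinimizedAt 𝓕 X x) / #𝓕 : ℝ) = (#X : ℝ)⁻¹

/-- The probability that `V` and `W` have the same MinHash under a uniformly random member of the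
family `𝓕`; it is `0` if `𝓕` is empty. -/
noncomputable def collisionProb (𝓕 : Finset (Equiv.Perm α)) (V W : Finset α)
    (hV : V.Nonempty) (hW : W.Nonempty) : ℝ :=
  #{π ∈ 𝓕 | minHash π V hV = minHash π W hW} / #𝓕

lemma isMinwiseIndependent_univ [Fintype α] :
    IsMinwiseIndependent (Finset.univ : Finset (Equiv.Perm α)) := by
  intro X x hx
  have hX : (#X : ℝ) ≠ 0 := mod_cast Finset.card_ne_zero_of_mem hx
  have hperm : (Fintype.card (Equiv.Perm α) : ℝ) ≠ 0 := mod_cast Fintype.card_ne_zero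
  rw [Finset.card_univ, div_eq_iff hperm, eq_inv_mul_iff_mul_eq₀ hX]
  exact_mod_cast card_mul_card_permsMinimizedAt_univ hx

lemma filter_minHash_eq_minHash (𝓕 : Finset (Equiv.Perm α)) (hV : V.Nonempty)
    (hW : W.Nonempty) :
    {π ∈ 𝓕 | minHash π V hV = minHash π W hW} =
      (V ∩ W).disjiUnion (permsMinimizedAt 𝓕 (V ∪ W))
        (pairwiseDisjoint_permsMinimizedAt 𝓕 Finset.inter_subset_union) := by
  ext π
  simp only [Finset.mem_filter, minHash_eq_minHash_iff, Finset.mem_disjiUnion,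
    mem_permsMinimizedAt]
  tauto

theorem IsMinwiseIndependent.collisionProb_eq_resemblance (h𝓕 : IsMinwiseIndependent 𝓕)
    (hV : V.Nonempty) (hW : W.Nonempty) :
    collisionProb 𝓕 V W hV hW = resemblance V W := by
  calc collisionProb 𝓕 V W hV hW
      = ∑ x ∈ V ∩ W, (#(permsMinimizedAt 𝓕 (V ∪ W) x) / #𝓕 : ℝ) := by
        rw [collisionProb, filter_minHash_eq_minHash, Finset.card_disjiUnion, Nat.cast_sum,
          Finset.sum_div]
    _ = ∑ _x ∈ V ∩ W, (#(V ∪ W) : ℝ)⁻¹ :=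
        Finset.sum_congr rfl fun x hx ↦ h𝓕 (V ∪ W) x (Finset.inter_subset_union hx)
    _ = resemblance V W := by
        rw [Finset.sum_const, nsmul_eq_mul, ← div_eq_mul_inv, resemblance]

theorem minhash_p1_bound_general (h𝓕 : IsMinwiseIndependent 𝓕) (hV : V.Nonempty)
    (hW : W.Nonempty) {S₀ : ℝ} (hS₀ : 0 ≤ S₀) (hS : S₀ ≤ cosineSimilarity V W) :
    S₀ ^ 2 ≤ collisionProb 𝓕 V W hV hW :=
  calc S₀ ^ 2 ≤ cosineSimilarity V W ^ 2 := by gcongr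
    _ ≤ resemblance V W := cosineSimilarity_sq_le_resemblance V W
    _ = collisionProb 𝓕 V W hV hW := (h𝓕.collisionProb_eq_resemblance hV hW).symm

end MinwiseIndependent

/-- MinHash `p1` bound for cosine similarity: if the cosine similarity `S` of nonempty
`W1, W2 ⊆ Fin D` satisfies `S ≥ S0` for `S0 ∈ [0,1]`, then the MinHash collision
probability is at least `S0²`. -/
theorem minhash_p1_bound (D : ℕ) (W1 W2 : Finset (Fin D))
    (h1 : W1.Nonempty) (h2 : W2.Nonempty) (S0 : ℝ) (hS0 : S0 ∈ Set.Icc (0 : ℝ) 1)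
    (hS : S0 ≤ ((W1 ∩ W2).card : ℝ) / Real.sqrt ((W1.card : ℝ) * (W2.card : ℝ))) :
    S0 ^ 2 ≤ ((Finset.univ.filter (fun π : Equiv.Perm (Fin D) =>
        (W1.image π).min' (h1.image π) = (W2.image π).min' (h2.image π))).card : ℝ) /
      (Fintype.card (Equiv.Perm (Fin D)) : ℝ) := by
  exact minhash_p1_bound_general isMinwiseIndependent_univ h1 h2 hS0.1 hS
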